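/- Let Z : Ω → ℝ^{d_z} be a measurable random variable on a probability space (Ω, P), let D_x be a set, and let μ, σ, f : D_x × ℝ^{d_z} → ℝ be such that σ ≥ 0 everywhere and for every x ∈ D_x the maps z ↦ μ(x,z), z ↦ σ(x,z), z ↦ f(x,z) are Borel measurable. Let β ≥ 0 and define l(x,z) := μ(x,z) − √β·σ(x,z) and u(x,z) := μ(x,z) + √β·σ(x,z), and assume l(x,z) ≤ f(x,z) ≤ u(x,z) for all x ∈ D_x, z ∈ ℝ^{d_z}. Fix α ∈ (0,1), let x* ∈ D_x be arbitrary, let x_t ∈ D_x satisfy VaR_α(u(x, Z)) ≤ VaR_α(u(x_t, Z)) for all x ∈ D_x, and let z_t ∈ ℝ^{d_z} be a lacing value with respect to x_t, i.e., l(x_t, z_t) ≤ VaR_α(l(x_t, Z)) and VaR_α(u(x_t, Z)) ≤ u(x_t, z_t). Then the instantaneous regret satisfies VaR_α(f(x*, Z)) − VaR_α(f(x_t, Z)) ≤ 2·√β·σ(x_t, z_t). -/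

import Mathlib

open MeasureTheory Set

/-- Value-at-risk of a real random variable `X` at level `α`. -/
noncomputable def VaR {Ω : Type*} [MeasurableSpace Ω] (P : Measure Ω)
    (X : Ω → ℝ) (α : ℝ) : ℝ :=
  sInf {w : ℝ | ENNReal.ofReal α ≤ P {ω | X ω ≤ w}}

theorem VaR_mono_aux {Ω : Type*} [MeasurableSpace Ω] (P : Measure Ω)
    [IsProbabilityMeasure P] (X Y : Ω → ℝ) (hX : Measurable X) (hY : Measurable Y)
    (hXY : ∀ ω, X ω ≤ Y ω) (α : ℝ) (hα : α ∈ Set.Ioo (0 : ℝ) 1) :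
    VaR P X α ≤ VaR P Y α := by
  have key : ∀ W : Ω → ℝ, Measurable W → ∀ w : ℝ,
      P {ω | W ω ≤ w} = ENNReal.ofReal (ProbabilityTheory.cdf (P.map W) w) := by
    intro W hW w
    haveI : IsProbabilityMeasure (P.map W) :=
      Measure.isProbabilityMeasure_map hW.aemeasurable
    rw [ProbabilityTheory.ofReal_cdf, Measure.map_apply hW measurableSet_Iic]
    rfl
  unfold VaR
  apply csInf_le_csInf
  · obtain ⟨a, ha⟩ := ((ProbabilityTheory.tendsto_cdf_atBot (P.map X)).eventually
      (gt_mem_nhds hα.1)).exists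
    refine ⟨a, fun w hw => ?_⟩
    by_contra hlt
    have hm := ProbabilityTheory.monotone_cdf (P.map X) (not_le.mp hlt).le
    rw [Set.mem_setOf_eq, key X hX,
      ENNReal.ofReal_le_ofReal_iff (ProbabilityTheory.cdf_nonneg _ _)] at hw
    linarith
  · obtain ⟨a, ha⟩ := ((ProbabilityTheory.tendsto_cdf_atTop (P.map Y)).eventually
      (lt_mem_nhds hα.2)).exists
    refine ⟨a, ?_⟩
    rw [Set.mem_setOf_eq, key Y hY]
    exact ENNReal.ofReal_le_ofReal ha.le
  · intro w hw
    exact le_trans hw (measure_mono fun ω hω => (hXY ω).trans hω)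

theorem stmt9 {Ω : Type*} [MeasurableSpace Ω] (P : Measure Ω)
    [IsProbabilityMeasure P] {dz : ℕ} (Z : Ω → (Fin dz → ℝ)) (hZ : Measurable Z)
    {Dx : Type*} (μ σ f : Dx → (Fin dz → ℝ) → ℝ)
    (hσ_nonneg : ∀ (x : Dx) (z : Fin dz → ℝ), 0 ≤ σ x z)
    (hμ : ∀ x : Dx, Measurable (μ x)) (hσ : ∀ x : Dx, Measurable (σ x))
    (hf : ∀ x : Dx, Measurable (f x))
    (β : ℝ) (hβ : 0 ≤ β)
    (l u : Dx → (Fin dz → ℝ) → ℝ)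
    (hldef : ∀ (x : Dx) (z : Fin dz → ℝ), l x z = μ x z - Real.sqrt β * σ x z)
    (hudef : ∀ (x : Dx) (z : Fin dz → ℝ), u x z = μ x z + Real.sqrt β * σ x z)
    (hlf : ∀ (x : Dx) (z : Fin dz → ℝ), l x z ≤ f x z)
    (hfu : ∀ (x : Dx) (z : Fin dz → ℝ), f x z ≤ u x z)
    (α : ℝ) (hα : α ∈ Set.Ioo (0 : ℝ) 1)
    (xstar xt : Dx)
    (hxt : ∀ x : Dx, VaR P (fun ω => u x (Z ω)) α ≤ VaR P (fun ω => u xt (Z ω)) α)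
    (zt : Fin dz → ℝ)
    (hzt_l : l xt zt ≤ VaR P (fun ω => l xt (Z ω)) α)
    (hzt_u : VaR P (fun ω => u xt (Z ω)) α ≤ u xt zt) :
    VaR P (fun ω => f xstar (Z ω)) α - VaR P (fun ω => f xt (Z ω)) α ≤
      2 * Real.sqrt β * σ xt zt := by
  have hum : ∀ x, Measurable (u x) := fun x => by
    have : u x = fun z => μ x z + Real.sqrt β * σ x z := funext (hudef x)
    rw [this]
    exact (hμ x).add ((hσ x).const_mul _)
  have hlm : ∀ x, Measurable (l x) := fun x => by
    have : l x = fun z => μ x z - Real.sqrt β * σ x z := funext (hldef x)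
    rw [this]
    exact (hμ x).sub ((hσ x).const_mul _)
  have h1 := VaR_mono_aux P (fun ω => f xstar (Z ω)) (fun ω => u xstar (Z ω))
    ((hf _).comp hZ) ((hum _).comp hZ) (fun ω => hfu _ _) α hα
  have h2 := VaR_mono_aux P (fun ω => l xt (Z ω)) (fun ω => f xt (Z ω))
    ((hlm _).comp hZ) ((hf _).comp hZ) (fun ω => hlf _ _) α hα
  have h3 := hxt xstar
  rw [hldef] at hzt_l
  rw [hudef] at hzt_u
  linarith
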